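/- arXiv:2409.06810 — 2 statements merged into one kernel-verified Lean document; each statement's English description precedes it below -/
import Mathlib

section
/- Let s, k ≥ 2 be integers with s ≥ 2k, and let F be an s-super-homogeneous k-partite k-graph on [n] with a fixed k-partition. If MI(F) has rank m, then |F| ≤ C(n,m). -/
open Finset Filter

attribute [local instance] Classical.propDecidable

/-- The vertex set `[n] = {1,…,n}`. -/
def vtx (n : ℕ) : Finset ℕ := Finset.Icc 1 n

/-- `F` is a `k`-graph on `[n]`: a family of `k`-element subsets of `[n]`. -/
def IsKGraphOn (k n : ℕ) (F : Finset (Finset ℕ)) : Prop :=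
  ∀ E ∈ F, E ⊆ vtx n ∧ E.card = k

/-- The vertex set of a hypergraph (union of its edges). -/
def vertexSet {α : Type} [DecidableEq α] (H : Finset (Finset α)) : Finset α := H.sup id

/-- The degree of a vertex: the number of edges containing it. -/
def vdeg {α : Type} [DecidableEq α] (H : Finset (Finset α)) (v : α) : ℕ :=
  (H.filter fun E => v ∈ E).card

/-- Hypertrees, defined recursively: a single edge is a hypertree, and a hypertree grows
by adding a new leaf edge `E` whose intersection with the current vertex set equals its
intersection with some existing (parent) edge `F`. -/
inductive IsHypertree {α : Type} [DecidableEq α] : Finset (Finset α) → Prop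
  | single (E : Finset α) : IsHypertree {E}
  | grow {H : Finset (Finset α)} (E F : Finset α) (hH : IsHypertree H) (hE : E ∉ H)
      (hF : F ∈ H) (hint : E ∩ vertexSet H = E ∩ F) : IsHypertree (insert E H)

/-- A `k`-tree: a `k`-uniform hypertree. -/
def IsKTree {α : Type} [DecidableEq α] (k : ℕ) (H : Finset (Finset α)) : Prop :=
  IsHypertree H ∧ ∀ E ∈ H, E.card = k

/-- A hypergraph is 2-contractible if every edge contains at least two vertices of degree 1. -/
def TwoContractible {α : Type} [DecidableEq α] (H : Finset (Finset α)) : Prop :=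
  ∀ E ∈ H, 2 ≤ (E.filter fun v => vdeg H v = 1).card

/-- `S` is a cross-cut of `H`: every edge meets `S` in exactly one vertex. -/
def IsCrosscut {α : Type} [DecidableEq α] (H : Finset (Finset α)) (S : Finset α) : Prop :=
  ∀ E ∈ H, (E ∩ S).card = 1

/-- `σ` is the cross-cut number of `H`: the minimum size of a cross-cut. -/
def IsCrosscutNumber {α : Type} [DecidableEq α] (H : Finset (Finset α)) (σ : ℕ) : Prop :=
  IsLeast {m | ∃ S : Finset α, IsCrosscut H S ∧ S.card = m} σ

/-- A hypergraph is `ℓ`-overlapping if any two distinct edges meet in at most `ℓ` vertices. -/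
def Overlapping {α : Type} [DecidableEq α] (ℓ : ℕ) (H : Finset (Finset α)) : Prop :=
  ∀ E ∈ H, ∀ F ∈ H, E ≠ F → (E ∩ F).card ≤ ℓ

/-- `K` is (the edge set of) a copy of `H`, i.e. the image of `H` under a map that is
injective on the vertex set of `H`. -/
def IsCopyOf {α : Type} [DecidableEq α] (H : Finset (Finset α)) (K : Finset (Finset ℕ)) : Prop :=
  ∃ φ : α → ℕ, Set.InjOn φ ↑(vertexSet H) ∧ K = H.image fun E => E.image φ

/-- `F` contains no subgraph isomorphic to `H`. -/
def HFree {α : Type} [DecidableEq α] (H : Finset (Finset α)) (F : Finset (Finset ℕ)) : Prop :=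
  ∀ K ⊆ F, ¬ IsCopyOf H K

/-- The collection of copies of `H` in `F` (as distinct subgraphs of `F`). -/
noncomputable def copies {α : Type} [DecidableEq α] (H : Finset (Finset α))
    (F : Finset (Finset ℕ)) : Finset (Finset (Finset ℕ)) :=
  F.powerset.filter (IsCopyOf H)

/-- The number of `H`-free `k`-graphs on the vertex set `[n]`. -/
noncomputable def forb {α : Type} [DecidableEq α] (n k : ℕ) (H : Finset (Finset α)) : ℕ :=
  (((vtx n).powersetCard k).powerset.filter (HFree H)).card

/-- `H` is a `k`-uniform linear cycle of length `ℓ`. -/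
def IsLinearCycle {α : Type} [DecidableEq α] (k ℓ : ℕ) (H : Finset (Finset α)) : Prop :=
  ∃ E : ℕ → Finset α,
    (∀ i < ℓ, (E i).card = k) ∧
    (∀ i < ℓ, ∀ j < ℓ, i ≠ j → E i ≠ E j) ∧
    (∀ i < ℓ, (E i ∩ E ((i + 1) % ℓ)).card = 1) ∧
    (∀ i < ℓ, ∀ j < ℓ, i ≠ j → E i ∩ E ((i + 1) % ℓ) ≠ E j ∩ E ((j + 1) % ℓ)) ∧
    (∀ i < ℓ, ∀ j < ℓ, i ≠ j → (i + 1) % ℓ ≠ j → (j + 1) % ℓ ≠ i → Disjoint (E i) (E j)) ∧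
    H = (Finset.range ℓ).image E

/-- `(X 0, …, X (k-1))` is a `k`-partition of `F`. -/
def IsKPartition (k : ℕ) (F : Finset (Finset ℕ)) (X : Fin k → Finset ℕ) : Prop :=
  (∀ i j, i ≠ j → Disjoint (X i) (X j)) ∧ ∀ E ∈ F, ∀ i, (E ∩ X i).card = 1

/-- The `J`-projection of an edge. -/
def projJ {k : ℕ} (X : Fin k → Finset ℕ) (J : Finset (Fin k)) (E : Finset ℕ) : Finset ℕ :=
  E ∩ J.sup X

/-- The pattern of a vertex set. -/
def pattern {k : ℕ} (X : Fin k → Finset ℕ) (D : Finset ℕ) : Finset (Fin k) :=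
  Finset.univ.filter fun i => (D ∩ X i).Nonempty

/-- `MI(F)`: the patterns of intersections of pairs of distinct edges. -/
noncomputable def MI {k : ℕ} (F : Finset (Finset ℕ)) (X : Fin k → Finset ℕ) :
    Finset (Finset (Fin k)) :=
  ((F ×ˢ F).filter fun p => p.1 ≠ p.2).image fun p => pattern X (p.1 ∩ p.2)

/-- The link of a vertex set `D` in `F`. -/
def link {α : Type} [DecidableEq α] (F : Finset (Finset α)) (D : Finset α) :
    Finset (Finset α) :=
  (F.filter fun E => D ⊆ E).image fun E => E \ D

/-- The degree of a vertex set `D` in `F`: the size of its link. -/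
def setDeg {α : Type} [DecidableEq α] (F : Finset (Finset α)) (D : Finset α) : ℕ :=
  (link F D).card

/-- A nonempty hypergraph is `s`-diverse if every vertex has degree less than `|H|/s`. -/
def SDiverse {α : Type} [DecidableEq α] (s : ℕ) (H : Finset (Finset α)) : Prop :=
  H.Nonempty ∧ ∀ v : α, s * vdeg H v < H.card

/-- `D` is `s`-strong in `F` if its link is `s`-diverse. -/
def SStrong {α : Type} [DecidableEq α] (s : ℕ) (F : Finset (Finset α)) (D : Finset α) : Prop :=
  SDiverse s (link F D)

/-- `F`, with `k`-partition `X`, is `s`-super-homogeneous: for every `J ∈ MI(F)` and every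
edge `E ∈ F`, the projection `E_J` is `s`-strong and `d_F(E_J) ≥ max{s, |F|/(2k·n^|J|)}`. -/
def SuperHomogeneous (n k s : ℕ) (F : Finset (Finset ℕ)) (X : Fin k → Finset ℕ) : Prop :=
  ∀ J ∈ MI F X, ∀ E ∈ F,
    SStrong s F (projJ X J E) ∧
    s ≤ setDeg F (projJ X J E) ∧
    (F.card : ℝ) / (2 * k * (n : ℝ) ^ J.card) ≤ (setDeg F (projJ X J E) : ℝ)

/-- The rank of a family of subsets of `[k]`: the minimum size of a set `D ⊆ [k]` contained
in no member of the family. -/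
noncomputable def rankFam (k : ℕ) (𝒥 : Finset (Finset (Fin k))) : ℕ :=
  sInf {d | ∃ D : Finset (Fin k), D.card = d ∧ ∀ J ∈ 𝒥, ¬ D ⊆ J}

/-- A family of subsets of `[k]` is of type 1 if it contains the full power set of some
`(k-2)`-set `B`. -/
def TypeOne (k : ℕ) (𝒥 : Finset (Finset (Fin k))) : Prop :=
  ∃ B : Finset (Fin k), B.card = k - 2 ∧ ∀ S ⊆ B, S ∈ 𝒥

/-- The constant `c(k,s) = k!/(k^k·(2s(1+2^k))^(2^k))`. -/
noncomputable def cks (k s : ℕ) : ℝ :=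
  (Nat.factorial k : ℝ) / ((k : ℝ) ^ k * (2 * (s : ℝ) * (1 + 2 ^ k)) ^ (2 ^ k))

/-- Degree of a set of vertices in a (uniform) hypergraph `K`: number of edges containing it. -/
def uDeg {α : Type} [DecidableEq α] (K : Finset (Finset α)) (S : Finset α) : ℕ :=
  (K.filter fun e => S ⊆ e).card

/-- A `t`-uniform hypergraph is `d`-graded if `d_K(S) ≤ d^(t-|S|)` for all `S` with
`1 ≤ |S| ≤ t`. -/
def Graded {α : Type} [DecidableEq α] (t : ℕ) (d : ℝ) (K : Finset (Finset α)) : Prop :=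
  ∀ S : Finset α, 1 ≤ S.card → S.card ≤ t → (uDeg K S : ℝ) ≤ d ^ (t - S.card)

/-- `S` is saturated by `K`: `d_K(S) = ⌊d^(t-|S|)⌋`. -/
def Saturated {α : Type} [DecidableEq α] (t : ℕ) (d : ℝ) (K : Finset (Finset α))
    (S : Finset α) : Prop :=
  uDeg K S = ⌊d ^ (t - S.card)⌋₊

/-- `S` is admissible: no nonempty subset of `S` is saturated. -/
def Admissible {α : Type} [DecidableEq α] (t : ℕ) (d : ℝ) (K : Finset (Finset α))
    (S : Finset α) : Prop :=
  ∀ S' ⊆ S, S'.Nonempty → ¬ Saturated t d K S'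

/-- `Z_K(S)`: the vertices `v` such that `S ∪ {v}` is inadmissible and `{v}` is not
saturated. -/
noncomputable def Zset {α : Type} [DecidableEq α] (t : ℕ) (d : ℝ) (K : Finset (Finset α))
    (S : Finset α) : Finset α :=
  (vertexSet K).filter fun v => ¬ Admissible t d K (insert v S) ∧ ¬ Saturated t d K {v}

/-- `ex(G,H)`: the maximum number of edges of an `H`-free subgraph of `G`. -/
noncomputable def exIn {α : Type} [DecidableEq α] (H : Finset (Finset α))
    (G : Finset (Finset ℕ)) : ℕ :=
  (G.powerset.filter (HFree H)).sup Finset.card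

/-- The probability, in the random `k`-graph `G^(k)(n,p)` (each `k`-subset of `[n]` is an
edge independently with probability `p`), of the event `A`. -/
noncomputable def probEvent (k n : ℕ) (p : ℝ) (A : Finset (Finset ℕ) → Prop) : ℝ :=
  ∑ G ∈ ((vtx n).powersetCard k).powerset.filter A,
    p ^ G.card * (1 - p) ^ (((vtx n).powersetCard k).card - G.card)

/-!
Fix a set `D` of `m` parts contained in no member of `MI(F)`. Two distinct edges with the same
`D`-projection would intersect in a set whose pattern contains `D`, so an edge is determined by its
`D`-projection, which is an `m`-subset of `[n]`.
-/

variable {k : ℕ} {F : Finset (Finset ℕ)} {X : Fin k → Finset ℕ} {J : Finset (Fin k)}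
  {E E' S V : Finset ℕ}

theorem mem_projJ {v : ℕ} : v ∈ projJ X J E ↔ v ∈ E ∧ ∃ i ∈ J, v ∈ X i := by
  simp only [projJ, mem_inter, Finset.mem_sup]

theorem projJ_eq_biUnion : projJ X J E = J.biUnion fun i => E ∩ X i := by
  rw [projJ, sup_eq_biUnion, inter_biUnion]

theorem mem_pattern {i : Fin k} : i ∈ pattern X S ↔ (S ∩ X i).Nonempty := by
  simp only [pattern, mem_filter_univ]

theorem pattern_inter_mem_MI (hE : E ∈ F) (hE' : E' ∈ F) (hne : E ≠ E') :
    pattern X (E ∩ E') ∈ MI F X :=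
  mem_image.2 ⟨(E, E'), mem_filter.2 ⟨mk_mem_product hE hE', hne⟩, rfl⟩

theorem exists_card_eq_rankFam {𝒥 : Finset (Finset (Fin k))} (h : univ ∉ 𝒥) :
    ∃ D : Finset (Fin k), D.card = rankFam k 𝒥 ∧ ∀ J ∈ 𝒥, ¬ D ⊆ J := by
  have nonempty : {d | ∃ D : Finset (Fin k), D.card = d ∧ ∀ J ∈ 𝒥, ¬ D ⊆ J}.Nonempty :=
    ⟨_, univ, rfl, fun J hJ hsub => h (univ_subset_iff.1 hsub ▸ hJ)⟩
  exact Nat.sInf_mem nonempty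

namespace IsKPartition

theorem card_projJ (hX : IsKPartition k F X) (hE : E ∈ F) : (projJ X J E).card = J.card := by
  have pairwise_disjoint : (J : Set (Fin k)).PairwiseDisjoint fun i => E ∩ X i :=
    fun i _ j _ hij => (hX.1 i j hij).mono inter_subset_right inter_subset_right
  rw [projJ_eq_biUnion, card_biUnion pairwise_disjoint, sum_congr rfl fun i _ => hX.2 E hE i,
    card_eq_sum_ones]

theorem projJ_univ (hX : IsKPartition k F X) (hE : E ∈ F) (hcard : E.card = k) :
    projJ X univ E = E :=
  eq_of_subset_of_card_le inter_subset_left (by rw [hX.card_projJ hE, hcard, card_fin])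

theorem subset_pattern_inter_iff (hX : IsKPartition k F X) (hE : E ∈ F) :
    J ⊆ pattern X (E ∩ E') ↔ projJ X J E ⊆ E' := by
  constructor
  · intro hJ v hv
    obtain ⟨hvE, i, hi, hvX⟩ := mem_projJ.1 hv
    obtain ⟨w, hw⟩ := mem_pattern.1 (hJ hi)
    obtain ⟨⟨hwE, hwE'⟩, hwX⟩ : (w ∈ E ∧ w ∈ E') ∧ w ∈ X i := by
      simpa only [mem_inter] using hw
    have hvw : v = w := card_le_one.1 (hX.2 E hE i).le v (mem_inter.2 ⟨hvE, hvX⟩) w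
      (mem_inter.2 ⟨hwE, hwX⟩)
    exact hvw ▸ hwE'
  · intro hsub i hi
    obtain ⟨v, hv⟩ : (E ∩ X i).Nonempty := card_pos.1 (hX.2 E hE i ▸ Nat.one_pos)
    obtain ⟨hvE, hvX⟩ := mem_inter.1 hv
    have hvE' : v ∈ E' := hsub (mem_projJ.2 ⟨hvE, i, hi, hvX⟩)
    exact mem_pattern.2 ⟨v, mem_inter.2 ⟨mem_inter.2 ⟨hvE, hvE'⟩, hvX⟩⟩

theorem univ_notMem_MI (hX : IsKPartition k F X) (hcard : ∀ E ∈ F, E.card = k) :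
    univ ∉ MI F X := by
  intro huniv
  obtain ⟨⟨E, E'⟩, hp, hpattern⟩ := mem_image.1 huniv
  obtain ⟨⟨hE, hE'⟩, hne⟩ : (E ∈ F ∧ E' ∈ F) ∧ E ≠ E' := by
    simpa only [mem_filter, mem_product] using hp
  have hsub : E ⊆ E' := by
    simpa only [hX.projJ_univ hE (hcard E hE)] using
      (hX.subset_pattern_inter_iff hE).1 hpattern.ge
  exact hne (eq_of_subset_of_card_le hsub (by rw [hcard E hE, hcard E' hE']))

theorem injOn_projJ (hX : IsKPartition k F X) (hJ : ∀ I ∈ MI F X, ¬ J ⊆ I) :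
    Set.InjOn (projJ X J) F := by
  intro E hE E' hE' heq
  by_contra hne
  refine hJ _ (pattern_inter_mem_MI hE hE' hne) ((hX.subset_pattern_inter_iff hE).2 ?_)
  exact heq ▸ inter_subset_left

theorem card_le_choose (hX : IsKPartition k F X) (hV : ∀ E ∈ F, E ⊆ V)
    (hJ : ∀ I ∈ MI F X, ¬ J ⊆ I) : F.card ≤ V.card.choose J.card := by
  have hmaps : Set.MapsTo (projJ X J) F (V.powersetCard J.card) := fun E hE =>
    mem_powersetCard.2 ⟨inter_subset_left.trans (hV E hE), hX.card_projJ hE⟩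
  simpa only [card_powersetCard] using card_le_card_of_injOn _ hmaps (hX.injOn_projJ hJ)

end IsKPartition

theorem stmt_6_general (hF : F ⊆ V.powersetCard k) (hpart : IsKPartition k F X) :
    F.card ≤ V.card.choose (rankFam k (MI F X)) := by
  obtain ⟨D, hDcard, hD⟩ := exists_card_eq_rankFam
    (hpart.univ_notMem_MI fun E hE => (mem_powersetCard.1 (hF hE)).2)
  exact hDcard ▸ hpart.card_le_choose (fun E hE => (mem_powersetCard.1 (hF hE)).1) hD

/-- if `MI(F)` has rank `m` then `|F| ≤ C(n,m)`. -/
theorem stmt_6 (k s n m : ℕ) (hk : 2 ≤ k) (hs : 2 ≤ s) (hsk : 2 * k ≤ s)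
    (F : Finset (Finset ℕ)) (X : Fin k → Finset ℕ)
    (hF : IsKGraphOn k n F) (hpart : IsKPartition k F X)
    (hsh : SuperHomogeneous n k s F X)
    (hm : rankFam k (MI F X) = m) :
    F.card ≤ n.choose m := by
  have hFV : F ⊆ (vtx n).powersetCard k := fun E hE => mem_powersetCard.2 (hF E hE)
  simpa [vtx, hm] using stmt_6_general hFV hpart
end

section
/- Let k ≥ 4 be an integer, let ε > 0, and let H be a 2-contractible k-tree with s vertices and t edges. Let F be an s-super-homogeneous k-partite k-graph on [n] (with its fixed k-partition) such that |F| ≥ ε·n^{k−1} and MI(F) is of type 1. Then F contains at least (ε/(2ks))^t·n^{s−t} copies of H (distinct subgraphs of F isomorphic to H). -/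
open Finset Filter

attribute [local instance] Classical.propDecidable

/-! Colour the vertices of `H` by the `k` parts so that edges are rainbow and every vertex lying
in two edges gets a colour from `B`; then build copies of `H` edge by edge, respecting the
colours. A new edge `E` meets the part of `H` embedded so far inside its parent edge, so the image
of that intersection is a projection `D` of an edge of `F` to some `J ⊆ B`. As `D` is strong, each
other vertex used so far lies in less than a fraction `1 / s` of the edges of `F` through `D`. If
`i` edges of `H` remain to be embedded, at most `s - i` vertices are used, because every edge
brings a new vertex; so a fraction `i / s` of the edges through `D` can serve as the image of `E`.
Conversely, a copy of a hypertree with `j` edges arises in at most `j` ways from a copy of the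
hypertree without its last edge. In the product of these ratios the factors `i` and `1 / j`
cancel. -/

theorem injOn_union_of_image_inter_subset {β γ : Type*} {f : β → γ} {S T : Set β}
    (hS : Set.InjOn f S) (hT : Set.InjOn f T) (h : f '' S ∩ f '' T ⊆ f '' (S ∩ T)) :
    Set.InjOn f (S ∪ T) := by
  have cross : ∀ x ∈ S, ∀ y ∈ T, f x = f y → x = y := by
    intro x hx y hy hxy
    obtain ⟨z, ⟨hzS, hzT⟩, hzx⟩ := h ⟨Set.mem_image_of_mem f hx, hxy ▸ Set.mem_image_of_mem f hy⟩
    exact (hS hzS hx hzx).symm.trans (hT hzT hy (hzx.trans hxy))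
  rintro x (hx | hx) y (hy | hy) hxy
  · exact hS hx hy hxy
  · exact cross x hx y hy hxy
  · exact (cross y hy x hx hxy.symm).symm
  · exact hT hx hy hxy

theorem card_inter_lt_of_ne {β : Type*} [DecidableEq β] {S T : Finset β} (hne : S ≠ T)
    (hcard : #T ≤ #S) : #(S ∩ T) < #S := by
  refine card_lt_card (inter_subset_left.ssubset_of_ne fun h => hne ?_)
  exact eq_of_subset_of_card_le (inter_eq_left.1 h) hcard

theorem exists_eqOn_injOn_mapsTo_of_card_le {β κ : Type*} [Nonempty κ] {S T : Finset β}
    {A : Finset κ} {c : β → κ} (hST : S ⊆ T) (hcard : #T ≤ #A) (hinj : Set.InjOn c S)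
    (hmaps : Set.MapsTo c S A) :
    ∃ c' : β → κ, Set.EqOn c' c (T \ S)ᶜ ∧ Set.InjOn c' T ∧ Set.MapsTo c' T A := by
  have hfree : #(T \ S) ≤ #(A \ S.image c) := by
    rw [card_sdiff_of_subset hST, card_sdiff_of_subset (image_subset_iff.2 hmaps),
      card_image_of_injOn hinj]
    exact Nat.sub_le_sub_right hcard _
  obtain ⟨g, hgmaps, hginj⟩ := (T \ S).finite_toSet.exists_injOn_of_encard_le
    (t := (↑(A \ S.image c) : Set κ)) (by simpa only [Set.encard_coe_eq_coe_finsetCard,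
      Nat.cast_le] using hfree)
  set c' : β → κ := (T \ S).piecewise g c
  have hnew : Set.EqOn c' g ↑(T \ S) := fun v hv => piecewise_eq_of_mem _ _ _ hv
  have hold : Set.EqOn c' c (↑(T \ S))ᶜ := fun v hv => piecewise_eq_of_notMem _ _ _ hv
  have holdS : Set.EqOn c' c S := hold.mono fun v hv hv' => (Finset.mem_sdiff.1 hv').2 hv
  have hT : (T : Set β) = ↑(T \ S) ∪ ↑S := by
    rw [← coe_union, sdiff_union_of_subset hST]
  refine ⟨c', by simpa only [coe_sdiff] using hold, ?_, ?_⟩ <;> rw [hT]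
  · refine (Set.injOn_union (disjoint_coe.2 sdiff_disjoint)).2
      ⟨hginj.congr hnew.symm, hinj.congr holdS.symm, fun v hv w hw hvw => ?_⟩
    rw [hnew hv, holdS hw] at hvw
    exact (Finset.mem_sdiff.1 (hgmaps hv)).2 (hvw ▸ mem_image_of_mem c hw)
  · refine Set.MapsTo.union (fun v hv => ?_) (hmaps.congr holdS.symm)
    rw [hnew hv]
    exact (Finset.mem_sdiff.1 (hgmaps hv)).1

-- Double counting of the pairs `K ⋖ L` with `K ∈ 𝒜` and `L ∈ ℬ`.
theorem card_mul_le_card_mul_of_insert_mem {β : Type*} [DecidableEq β] {𝒜 ℬ : Finset (Finset β)}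
    {m : ℝ} {t : ℕ} (hℬ : ∀ L ∈ ℬ, #L ≤ t)
    (h𝒜 : ∀ K ∈ 𝒜, ∃ S : Finset β, m ≤ #S ∧ ∀ f ∈ S, f ∉ K ∧ insert f K ∈ ℬ) :
    #𝒜 * m ≤ #ℬ * t := by
  simp only [← nsmul_eq_mul]
  refine card_nsmul_le_card_nsmul (fun K L : Finset β => K ⋖ L) (fun K hK => ?_) fun L hL => ?_
  · obtain ⟨S, hmS, hS⟩ := h𝒜 K hK
    refine hmS.trans (Nat.cast_le.2 (card_le_card_of_injOn (insert · K) (fun f hf => ?_) ?_))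
    · exact mem_bipartiteAbove _ |>.2
        ⟨(hS f hf).2, covBy_iff_exists_insert.2 ⟨f, (hS f hf).1, rfl⟩⟩
    · intro f hf g _ hfg
      have hmem : f ∈ insert g K := (show insert f K = insert g K from hfg) ▸ mem_insert_self f K
      exact (mem_insert.1 hmem).resolve_right (hS f hf).1
  · have hsub : 𝒜.bipartiteBelow (fun K L : Finset β => K ⋖ L) L ⊆ L.image L.erase := by
      intro K hK
      obtain ⟨f, hf, rfl⟩ := covBy_iff_exists_insert.1 (mem_bipartiteBelow _ |>.1 hK).2
      exact mem_image.2 ⟨f, mem_insert_self f K, erase_insert hf⟩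
    exact Nat.cast_le.2 ((card_le_card hsub).trans (card_image_le.trans (hℬ L hL)))

section Hypertree

variable {α : Type} [DecidableEq α] {H : Finset (Finset α)} {E : Finset α}

theorem subset_vertexSet (hE : E ∈ H) : E ⊆ vertexSet H :=
  le_sup (f := id) hE

theorem vertexSet_insert (H : Finset (Finset α)) (E : Finset α) :
    vertexSet (insert E H) = E ∪ vertexSet H :=
  sup_insert

theorem vertexSet_singleton (E : Finset α) : vertexSet {E} = E :=
  sup_singleton

theorem card_vertexSet_insert_add_card_inter {P : Finset α}
    (hint : E ∩ vertexSet H = E ∩ P) :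
    #(vertexSet (insert E H)) + #(E ∩ P) = #E + #(vertexSet H) := by
  rw [vertexSet_insert, ← hint, card_union_add_card_inter]

theorem IsHypertree.nonempty (hH : IsHypertree H) : H.Nonempty := by
  cases hH with
  | single E => exact singleton_nonempty E
  | grow E => exact insert_nonempty E _

theorem IsHypertree.card_le_card_vertexSet {k : ℕ} (hk : 0 < k) (hH : IsHypertree H)
    (hunif : ∀ E ∈ H, #E = k) : #H ≤ #(vertexSet H) := by
  induction hH with
  | single E =>
    rw [vertexSet_singleton, card_singleton, hunif E (mem_singleton_self E)]
    exact hk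
  | @grow H E P _ hE hP hint ih =>
    rw [forall_mem_insert] at hunif
    have hlt := card_inter_lt_of_ne (ne_of_mem_of_not_mem hP hE).symm
      (hunif.1 ▸ hunif.2 P hP).le
    have hvert := card_vertexSet_insert_add_card_inter hint
    have hcard := card_insert_of_notMem hE
    have := ih hunif.2
    omega

theorem inter_subset_filter_vdeg_ne_one {E' : Finset α} (hE : E ∈ H) (hE' : E' ∈ H)
    (hne : E ≠ E') : E ∩ E' ⊆ {v ∈ E | vdeg H v ≠ 1} := by
  intro v hv
  obtain ⟨hvE, hvE'⟩ := mem_inter.1 hv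
  refine mem_filter.2 ⟨hvE, fun hdeg => hne ?_⟩
  exact card_le_one.1 (Eq.le hdeg) E (mem_filter.2 ⟨hE, hvE⟩) E' (mem_filter.2 ⟨hE', hvE'⟩)

theorem TwoContractible.card_filter_vdeg_ne_one_le (h : TwoContractible H) (hE : E ∈ H) :
    #{v ∈ E | vdeg H v ≠ 1} ≤ #E - 2 := by
  have hsplit := card_filter_add_card_filter_not (s := E) fun v => vdeg H v = 1
  have := h E hE
  simp only [ne_eq]
  omega

end Hypertree

section Coloring

variable {α κ : Type} [DecidableEq α] {H : Finset (Finset α)} {B : Finset κ} {c : α → κ}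

/-- A vertex colouring that assigns distinct colours to the vertices of each edge and colours from
the palette `B` to all vertices lying in two edges. Embeddings of `H` into a `k`-partite `k`-graph
are sought that send each vertex to the part named by its colour. -/
structure IsAdaptedColoring (H : Finset (Finset α)) (B : Finset κ) (c : α → κ) : Prop where
  injOn : ∀ E ∈ H, Set.InjOn c E
  mapsTo_inter : ∀ E ∈ H, ∀ E' ∈ H, E ≠ E' → Set.MapsTo c ↑(E ∩ E') B

theorem IsAdaptedColoring.mono {H' : Finset (Finset α)} (hc : IsAdaptedColoring H B c)
    (hH' : H' ⊆ H) : IsAdaptedColoring H' B c where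
  injOn E hE := hc.injOn E (hH' hE)
  mapsTo_inter E hE E' hE' := hc.mapsTo_inter E (hH' hE) E' (hH' hE')

theorem exists_eqOn_injOn_mapsTo_inter [Fintype κ] [Nonempty κ] {E S W : Finset α}
    (hSE : S ⊆ E) (hSW : S ⊆ W) (hE : #E ≤ Fintype.card κ) (hEW : #(E ∩ W) ≤ #B)
    (hinj : Set.InjOn c S) (hmaps : Set.MapsTo c S B) :
    ∃ c' : α → κ, Set.EqOn c' c (E \ S)ᶜ ∧ Set.InjOn c' E ∧ Set.MapsTo c' ↑(E ∩ W) B := by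
  obtain ⟨c₁, heq₁, hinj₁, hmaps₁⟩ :=
    exists_eqOn_injOn_mapsTo_of_card_le (subset_inter hSE hSW) hEW hinj hmaps
  obtain ⟨c₂, heq₂, hinj₂, -⟩ := exists_eqOn_injOn_mapsTo_of_card_le
    (inter_subset_left (s₁ := E) (s₂ := W)) (A := univ) hE hinj₁ fun _ _ => mem_univ _
  have heqW : Set.EqOn c₂ c₁ ↑(E ∩ W) := fun _ hv => heq₂ fun hv' => hv'.2 hv
  refine ⟨c₂, fun v hv => ?_, hinj₂, hmaps₁.congr heqW.symm⟩
  rw [heq₂ fun h => hv ⟨h.1, fun hvS => h.2 (subset_inter hSE hSW hvS)⟩,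
    heq₁ fun h => hv ⟨(mem_inter.1 h.1).1, h.2⟩]

theorem IsHypertree.exists_injOn_mapsTo_inter [Fintype κ] [Nonempty κ] {W : Finset α}
    (hH : IsHypertree H) (hcard : ∀ E ∈ H, #E ≤ Fintype.card κ) (hW : ∀ E ∈ H, #(E ∩ W) ≤ #B)
    (hinter : ∀ E ∈ H, ∀ E' ∈ H, E ≠ E' → E ∩ E' ⊆ W) :
    ∃ c : α → κ, ∀ E ∈ H, Set.InjOn c E ∧ Set.MapsTo c ↑(E ∩ W) B := by
  induction hH with
  | single E =>
    simp only [mem_singleton, forall_eq] at hcard hW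
    obtain ⟨c, -, hc⟩ := exists_eqOn_injOn_mapsTo_inter (c := fun _ : α => Classical.arbitrary κ)
      (empty_subset E) (empty_subset W) hcard hW (by simp) (by simp [Set.MapsTo])
    exact ⟨c, by simpa only [mem_singleton, forall_eq] using hc⟩
  | @grow H E P _ hE hP hint ih =>
    obtain ⟨c, hc⟩ := ih (fun E' h => hcard E' (mem_insert_of_mem h))
      (fun E' h => hW E' (mem_insert_of_mem h))
      (fun E' h E'' h' => hinter E' (mem_insert_of_mem h) E'' (mem_insert_of_mem h'))
    have hEPW : E ∩ P ⊆ W := hinter E (mem_insert_self E H) P (mem_insert_of_mem hP)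
      (ne_of_mem_of_not_mem hP hE).symm
    obtain ⟨c', heq, hc'⟩ := exists_eqOn_injOn_mapsTo_inter inter_subset_left hEPW
      (hcard E (mem_insert_self E H)) (hW E (mem_insert_self E H))
      ((hc P hP).1.mono (coe_subset.2 inter_subset_right))
      ((hc P hP).2.mono_left (coe_subset.2 (subset_inter inter_subset_right hEPW)))
    have hold : Set.EqOn c' c (vertexSet H) := fun v hv => heq fun hv' => hv'.2 <| by
      rw [← hint]
      exact mem_inter.2 ⟨hv'.1, hv⟩
    refine ⟨c', forall_mem_insert .. |>.2 ⟨hc', fun E' hE' => ?_⟩⟩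
    have hold' : Set.EqOn c' c E' := hold.mono (coe_subset.2 (subset_vertexSet hE'))
    exact ⟨(hc E' hE').1.congr hold'.symm,
      (hc E' hE').2.congr (hold'.mono (coe_subset.2 inter_subset_left)).symm⟩

theorem IsHypertree.exists_isAdaptedColoring [Fintype κ] [Nonempty κ] (hH : IsHypertree H)
    (hcard : ∀ E ∈ H, #E ≤ Fintype.card κ) (hshared : ∀ E ∈ H, #{v ∈ E | vdeg H v ≠ 1} ≤ #B) :
    ∃ c : α → κ, IsAdaptedColoring H B c := by
  set W : Finset α := {v ∈ vertexSet H | vdeg H v ≠ 1}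
  have hEW : ∀ E ∈ H, E ∩ W = {v ∈ E | vdeg H v ≠ 1} := fun E hE => by
    rw [inter_filter, inter_eq_left.2 (subset_vertexSet hE)]
  have hinter : ∀ E ∈ H, ∀ E' ∈ H, E ≠ E' → E ∩ E' ⊆ E ∩ W := fun E hE E' hE' hne =>
    hEW E hE ▸ inter_subset_filter_vdeg_ne_one hE hE' hne
  obtain ⟨c, hc⟩ := hH.exists_injOn_mapsTo_inter hcard (fun E hE => hEW E hE ▸ hshared E hE)
    fun E hE E' hE' hne => (hinter E hE E' hE' hne).trans inter_subset_right
  exact ⟨c, fun E hE => (hc E hE).1, fun E hE E' hE' hne =>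
    (hc E hE).2.mono_left (coe_subset.2 (hinter E hE E' hE' hne))⟩

end Coloring

section Link

variable {α : Type} [DecidableEq α] {F : Finset (Finset α)} {D U : Finset α}

theorem setDeg_le_card_filter_inter_eq_add_sum_vdeg (hDU : D ⊆ U) :
    setDeg F D ≤ #{f ∈ F | f ∩ U = D} + ∑ v ∈ U \ D, vdeg (link F D) v := by
  have hcover : link F D ⊆ {f ∈ F | f ∩ U = D}.image (· \ D) ∪
      (U \ D).biUnion fun v => {e ∈ link F D | v ∈ e} := by
    intro e he
    obtain ⟨f, hf, rfl⟩ := mem_image.1 he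
    obtain ⟨hfF, hDf⟩ := mem_filter.1 hf
    by_cases htrace : f ∩ U = D
    · exact mem_union_left _ (mem_image.2 ⟨f, mem_filter.2 ⟨hfF, htrace⟩, rfl⟩)
    · obtain ⟨v, hv, hvD⟩ := not_subset.1 fun h => htrace (h.antisymm (subset_inter hDf hDU))
      obtain ⟨hvf, hvU⟩ := mem_inter.1 hv
      exact mem_union_right _ (mem_biUnion.2 ⟨v, Finset.mem_sdiff.2 ⟨hvU, hvD⟩,
        mem_filter.2 ⟨he, Finset.mem_sdiff.2 ⟨hvf, hvD⟩⟩⟩)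
  exact (card_le_card hcover).trans <| (card_union_le _ _).trans <|
    add_le_add card_image_le card_biUnion_le

theorem SStrong.mul_setDeg_le {r s : ℕ} (hD : SStrong s F D) (hDU : D ⊆ U)
    (hr : #(U \ D) + r ≤ s) : r * setDeg F D ≤ s * #{f ∈ F | f ∩ U = D} := by
  have hcover := Nat.mul_le_mul_left s (setDeg_le_card_filter_inter_eq_add_sum_vdeg (F := F) hDU)
  have hdiverse : s * ∑ v ∈ U \ D, vdeg (link F D) v ≤ #(U \ D) * setDeg F D := by
    rw [mul_sum, ← smul_eq_mul (#(U \ D))]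
    exact sum_le_card_nsmul _ _ _ fun v _ => (hD.2 v).le
  have hsplit := Nat.mul_le_mul_right (setDeg F D) hr
  rw [add_mul] at hsplit
  rw [mul_add] at hcover
  omega

end Link

section ColoredEmbedding

variable {α : Type} {k : ℕ} {F : Finset (Finset ℕ)} {X : Fin k → Finset ℕ} {c : α → Fin k}

theorem IsKPartition.exists_transversal (hpart : IsKPartition k F X) {f : Finset ℕ} (hf : f ∈ F)
    (hcard : #f = k) :
    ∃ g : Fin k → ℕ, Function.Injective g ∧ (∀ i, g i ∈ X i) ∧ univ.image g = f := by
  choose g hg using fun i => card_pos.1 (hpart.2 f hf i ▸ Nat.one_pos)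
  have hgX : ∀ i, g i ∈ X i := fun i => (mem_inter.1 (hg i)).2
  have hinj : Function.Injective g := fun i j hij => by
    by_contra hne
    exact disjoint_left.1 (hpart.1 i j hne) (hgX i) (hij ▸ hgX j)
  refine ⟨g, hinj, hgX, eq_of_subset_of_card_le ?_ ?_⟩
  · exact image_subset_iff.2 fun i _ => (mem_inter.1 (hg i)).1
  · rw [card_image_of_injective _ hinj, card_univ, Fintype.card_fin, hcard]

theorem IsKPartition.exists_image_eq (hpart : IsKPartition k F X) {f : Finset ℕ} (hf : f ∈ F)
    (hcard : #f = k) {E : Finset α} (hE : #E = k) (hc : Set.InjOn c E) :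
    ∃ ψ : α → ℕ, Set.InjOn ψ E ∧ (∀ v, ψ v ∈ X (c v)) ∧ E.image ψ = f := by
  obtain ⟨g, hginj, hgX, hgf⟩ := hpart.exists_transversal hf hcard
  have hsurj : E.image c = univ := by
    rw [← card_eq_iff_eq_univ, card_image_of_injOn hc, hE, Fintype.card_fin]
  exact ⟨g ∘ c, hginj.comp_injOn hc, fun v => hgX (c v), by rw [← image_image, hsurj, hgf]⟩

theorem IsKPartition.projJ_image (hpart : IsKPartition k F X) {φ : α → ℕ} {S P : Finset α}
    (hSP : S ⊆ P) (hc : Set.InjOn c P) (hφ : ∀ v ∈ P, φ v ∈ X (c v)) :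
    projJ X (S.image c) (P.image φ) = S.image φ := by
  ext x
  simp only [projJ, mem_inter, Finset.mem_sup]
  constructor
  · rintro ⟨hxP, i, hi, hxi⟩
    obtain ⟨u, hu, rfl⟩ := mem_image.1 hxP
    obtain ⟨w, hw, rfl⟩ := mem_image.1 hi
    have hcolor : c u = c w := by
      by_contra hne
      exact disjoint_left.1 (hpart.1 _ _ hne) (hφ u hu) hxi
    exact mem_image_of_mem φ (hc hu (hSP hw) hcolor ▸ hw)
  · intro hx
    obtain ⟨u, hu, rfl⟩ := mem_image.1 hx
    exact ⟨mem_image_of_mem φ (hSP hu), c u, mem_image_of_mem c hu, hφ u (hSP hu)⟩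

theorem IsKPartition.eqOn_of_image_subset (hpart : IsKPartition k F X)
    {f : Finset ℕ} (hf : f ∈ F) {φ ψ : α → ℕ} {S : Finset α}
    (hφf : S.image φ ⊆ f) (hψf : S.image ψ ⊆ f)
    (hφ : ∀ v ∈ S, φ v ∈ X (c v)) (hψ : ∀ v ∈ S, ψ v ∈ X (c v)) : Set.EqOn φ ψ S :=
  fun v hv => card_le_one.1 (hpart.2 f hf (c v)).le _
    (mem_inter.2 ⟨hφf (mem_image_of_mem φ hv), hφ v hv⟩) _
    (mem_inter.2 ⟨hψf (mem_image_of_mem ψ hv), hψ v hv⟩)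

variable [DecidableEq α] {H : Finset (Finset α)} {φ : α → ℕ}

/-- `φ` embeds `H` into `F` and sends every vertex of colour `i` to the part `X i`. The values of
`φ` outside the vertex set of `H` are irrelevant. -/
structure IsColoredEmbedding (H : Finset (Finset α)) (F : Finset (Finset ℕ)) (X : Fin k → Finset ℕ)
    (c : α → Fin k) (φ : α → ℕ) : Prop where
  injOn : Set.InjOn φ (vertexSet H)
  image_mem : ∀ E ∈ H, E.image φ ∈ F
  mem_part : ∀ v ∈ vertexSet H, φ v ∈ X (c v)

/-- The copies of `H` in `F` that are the image of a coloured embedding. -/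
noncomputable def coloredCopies (H : Finset (Finset α)) (F : Finset (Finset ℕ))
    (X : Fin k → Finset ℕ) (c : α → Fin k) : Finset (Finset (Finset ℕ)) :=
  {K ∈ F.powerset | ∃ φ, IsColoredEmbedding H F X c φ ∧ H.image (fun E => E.image φ) = K}

theorem mem_coloredCopies {K : Finset (Finset ℕ)} : K ∈ coloredCopies H F X c ↔
    ∃ φ, IsColoredEmbedding H F X c φ ∧ H.image (fun E => E.image φ) = K := by
  refine ⟨fun h => (mem_filter.1 h).2, fun h => mem_filter.2 ⟨?_, h⟩⟩
  obtain ⟨φ, hφ, rfl⟩ := h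
  exact mem_powerset.2 (image_subset_iff.2 hφ.image_mem)

theorem coloredCopies_subset_copies : coloredCopies H F X c ⊆ copies H F :=
  monotone_filter_right _ fun _ _ ⟨φ, hφ, hK⟩ => ⟨φ, hφ.injOn, hK.symm⟩

theorem card_le_of_mem_coloredCopies {K : Finset (Finset ℕ)} (hK : K ∈ coloredCopies H F X c) :
    #K ≤ #H := by
  obtain ⟨φ, -, rfl⟩ := mem_coloredCopies.1 hK
  exact card_image_le

theorem card_le_card_coloredCopies_singleton (hpart : IsKPartition k F X)
    (hF : ∀ f ∈ F, #f = k) {E : Finset α} (hE : #E = k) (hc : Set.InjOn c E) :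
    #F ≤ #(coloredCopies {E} F X c) := by
  refine card_le_card_of_injOn (fun f => {f}) (fun f hf => mem_coloredCopies.2 ?_)
    singleton_injective.injOn
  obtain ⟨ψ, hψinj, hψX, hψf⟩ := hpart.exists_image_eq hf (hF f hf) hE hc
  refine ⟨ψ, ⟨?_, ?_, fun v _ => hψX v⟩, by rw [image_singleton, hψf]⟩
  · rwa [vertexSet_singleton]
  · simpa only [mem_singleton, forall_eq, hψf, mem_coe] using hf

theorem IsColoredEmbedding.exists_extension (hφ : IsColoredEmbedding H F X c φ)
    (hpart : IsKPartition k F X) {E P : Finset α} (hint : E ∩ vertexSet H = E ∩ P) (hE : #E = k)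
    (hc : Set.InjOn c E) {f : Finset ℕ} (hf : f ∈ F) (hfk : #f = k)
    (htrace : f ∩ (vertexSet H).image φ = (E ∩ P).image φ) :
    ∃ φ', IsColoredEmbedding (insert E H) F X c φ' ∧ Set.EqOn φ' φ (vertexSet H) ∧
      E.image φ' = f := by
  obtain ⟨ψ, hψinj, hψX, hψf⟩ := hpart.exists_image_eq hf hfk hE hc
  have hagree : Set.EqOn φ ψ ↑(E ∩ vertexSet H) :=
    hpart.eqOn_of_image_subset hf (by rw [hint, ← htrace]; exact inter_subset_left)
      (hψf ▸ image_subset_image inter_subset_left)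
      (fun v hv => hφ.mem_part v (mem_inter.1 hv).2) fun v _ => hψX v
  set φ' : α → ℕ := (vertexSet H).piecewise φ ψ
  have hold : Set.EqOn φ' φ (vertexSet H) := fun v hv => piecewise_eq_of_mem _ _ _ hv
  have hnew : Set.EqOn φ' ψ E := fun v hvE => by
    by_cases hv : v ∈ vertexSet H
    · rw [hold hv, hagree (mem_inter.2 ⟨hvE, hv⟩)]
    · exact piecewise_eq_of_notMem _ _ _ hv
  have hEf : E.image φ' = f := (image_congr hnew).trans hψf
  refine ⟨φ', ⟨?_, forall_mem_insert .. |>.2 ⟨hEf ▸ hf, fun E' hE' => ?_⟩, fun v _ => ?_⟩,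
    hold, hEf⟩
  · rw [vertexSet_insert, coe_union]
    refine injOn_union_of_image_inter_subset (hψinj.congr hnew.symm) (hφ.injOn.congr hold.symm) ?_
    rw [hold.image_eq, ← coe_image, ← coe_image, hEf, ← coe_inter, htrace, ← hint, coe_image,
      ← coe_inter, (hold.mono (coe_subset.2 inter_subset_right)).image_eq]
  · rw [image_congr (hold.mono (coe_subset.2 (subset_vertexSet hE')))]
    exact hφ.image_mem E' hE'
  · by_cases hv : v ∈ vertexSet H
    · exact hold hv ▸ hφ.mem_part v hv
    · rw [show φ' v = ψ v from piecewise_eq_of_notMem _ _ _ hv]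
      exact hψX v

theorem IsColoredEmbedding.insert_mem_coloredCopies (hφ : IsColoredEmbedding H F X c φ)
    (hpart : IsKPartition k F X) {E P : Finset α} (hint : E ∩ vertexSet H = E ∩ P) (hE : #E = k)
    (hc : Set.InjOn c E) {f : Finset ℕ} (hf : f ∈ F) (hfk : #f = k)
    (htrace : f ∩ (vertexSet H).image φ = (E ∩ P).image φ) :
    insert f (H.image fun E => E.image φ) ∈ coloredCopies (insert E H) F X c := by
  obtain ⟨φ', hφ', hold, hEf⟩ := hφ.exists_extension hpart hint hE hc hf hfk htrace
  refine mem_coloredCopies.2 ⟨φ', hφ', ?_⟩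
  rw [image_insert, hEf]
  congr 1
  exact image_congr fun E' hE' =>
    image_congr (hold.mono (coe_subset.2 (subset_vertexSet hE')))

theorem notMem_image_of_inter_image_vertexSet {E P : Finset α} (hEP : #(E ∩ P) < k)
    {f : Finset ℕ} (hfk : #f = k)
    (htrace : f ∩ (vertexSet H).image φ = (E ∩ P).image φ) :
    f ∉ H.image fun E => E.image φ := by
  intro hf
  obtain ⟨Q, hQ, rfl⟩ := mem_image.1 hf
  rw [inter_eq_left.2 (image_subset_image (subset_vertexSet hQ))] at htrace
  exact hEP.not_ge (hfk ▸ htrace ▸ card_image_le)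

theorem card_coloredCopies_mul_le (hpart : IsKPartition k F X) (hF : ∀ f ∈ F, #f = k)
    {E P : Finset α} (hE : E ∉ H) (hint : E ∩ vertexSet H = E ∩ P) (hEk : #E = k)
    (hEP : #(E ∩ P) < k) (hc : Set.InjOn c E) {m : ℝ}
    (hm : ∀ φ, IsColoredEmbedding H F X c φ →
      m ≤ #{f ∈ F | f ∩ (vertexSet H).image φ = (E ∩ P).image φ}) :
    #(coloredCopies H F X c) * m ≤ #(coloredCopies (insert E H) F X c) * (#H + 1) := by
  rw [← Nat.cast_add_one, ← card_insert_of_notMem hE]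
  refine card_mul_le_card_mul_of_insert_mem (fun L hL => card_le_of_mem_coloredCopies hL) ?_
  intro K hK
  obtain ⟨φ, hφ, rfl⟩ := mem_coloredCopies.1 hK
  refine ⟨_, hm φ hφ, fun f hf => ?_⟩
  obtain ⟨hfF, htrace⟩ := mem_filter.1 hf
  exact ⟨notMem_image_of_inter_image_vertexSet hEP (hF f hfF) htrace,
    hφ.insert_mem_coloredCopies hpart hint hEk hc hfF (hF f hfF) htrace⟩

end ColoredEmbedding

section Counting

variable {α : Type} [DecidableEq α] {k n s r : ℕ} {F : Finset (Finset ℕ)} {X : Fin k → Finset ℕ}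
  {B : Finset (Fin k)} {c : α → Fin k} {H : Finset (Finset α)} {δ x : ℝ}

/-- Every projection of an edge to a set `J ⊆ B` of parts is `s`-strong and, unless `J` consists of
all `k` parts, lies in at least `s δ x^(k-1-|J|)` edges. The number `x` plays the role of the order
`n` of the hypergraph. -/
structure HasRichProjections (F : Finset (Finset ℕ)) (X : Fin k → Finset ℕ) (B : Finset (Fin k))
    (s : ℕ) (δ x : ℝ) : Prop where
  sStrong : ∀ J ⊆ B, ∀ E ∈ F, SStrong s F (projJ X J E)
  le_setDeg : ∀ J ⊆ B, #J < k → ∀ E ∈ F, s * (δ * x ^ (k - 1 - #J)) ≤ setDeg F (projJ X J E)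

theorem SuperHomogeneous.hasRichProjections (hsh : SuperHomogeneous n k s F X)
    (hB : ∀ J ⊆ B, J ∈ MI F X) (hn : 0 < n) (hk : 0 < k) (hs : 0 < s) {ε : ℝ}
    (hsize : ε * (n : ℝ) ^ (k - 1) ≤ #F) :
    HasRichProjections F X B s (ε / (2 * k * s)) n where
  sStrong J hJ E hE := (hsh J (hB J hJ) E hE).1
  le_setDeg J hJ hJk E hE := by
    refine le_trans ?_ (hsh J (hB J hJ) E hE).2.2
    have hpow : (n : ℝ) ^ (k - 1) = (n : ℝ) ^ (k - 1 - #J) * (n : ℝ) ^ #J := by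
      rw [← pow_add, Nat.sub_add_cancel (Nat.le_sub_one_of_lt hJk)]
    rw [le_div_iff₀ (by positivity)]
    refine le_trans (le_of_eq ?_) hsize
    rw [hpow]
    field_simp

theorem IsColoredEmbedding.le_card_filter_inter_eq {φ : α → ℕ}
    (hφ : IsColoredEmbedding H F X c φ) (hpart : IsKPartition k F X)
    (hrich : HasRichProjections F X B s δ x) {E P : Finset α} (hP : P ∈ H) (hEP : #(E ∩ P) < k)
    (hcP : Set.InjOn c P) (hcB : Set.MapsTo c ↑(E ∩ P) B)
    (hr : #(vertexSet H) + (r + 1) ≤ s + #(E ∩ P)) :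
    (r + 1) * (δ * x ^ (k - 1 - #(E ∩ P))) ≤
      #{f ∈ F | f ∩ (vertexSet H).image φ = (E ∩ P).image φ} := by
  set D : Finset ℕ := (E ∩ P).image φ
  set U : Finset ℕ := (vertexSet H).image φ
  have hEPH : E ∩ P ⊆ vertexSet H := inter_subset_right.trans (subset_vertexSet hP)
  have hJB : (E ∩ P).image c ⊆ B := image_subset_iff.2 hcB
  have hJcard : #((E ∩ P).image c) = #(E ∩ P) :=
    card_image_of_injOn (hcP.mono (coe_subset.2 inter_subset_right))
  have hproj : projJ X ((E ∩ P).image c) (P.image φ) = D :=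
    hpart.projJ_image inter_subset_right hcP fun v hv => hφ.mem_part v (subset_vertexSet hP hv)
  have hstrong : SStrong s F D := hproj ▸ hrich.sStrong _ hJB _ (hφ.image_mem P hP)
  have hdeg : s * (δ * x ^ (k - 1 - #(E ∩ P))) ≤ setDeg F D := by
    have := hrich.le_setDeg _ hJB (hJcard ▸ hEP) _ (hφ.image_mem P hP)
    rwa [hproj, hJcard] at this
  have hDU : D ⊆ U := image_subset_image hEPH
  have hUD : #(U \ D) + (r + 1) ≤ s := by
    rw [card_sdiff_of_subset hDU, card_image_of_injOn hφ.injOn,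
      card_image_of_injOn (hφ.injOn.mono (coe_subset.2 hEPH))]
    have := card_le_card hEPH
    omega
  have hs : (0 : ℝ) < s := by
    exact_mod_cast (Nat.succ_pos r).trans_le ((Nat.le_add_left _ _).trans hUD)
  refine le_of_mul_le_mul_left ?_ hs
  calc (s : ℝ) * ((r + 1) * (δ * x ^ (k - 1 - #(E ∩ P))))
      = (r + 1) * (s * (δ * x ^ (k - 1 - #(E ∩ P)))) := by ring
    _ ≤ (r + 1) * setDeg F D := by gcongr
    _ ≤ s * #{f ∈ F | f ∩ U = D} := by exact_mod_cast hstrong.mul_setDeg_le hDU hUD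

theorem choose_succ_mul_pow_le_of_mul_le {N N' : ℝ} {h p q : ℕ}
    (hδ : 0 ≤ δ) (hx : 0 ≤ x)
    (hN : ((r + 1 + h).choose h : ℝ) * δ ^ h * x ^ q ≤ N)
    (hN' : N * ((r + 1) * (δ * x ^ p)) ≤ N' * (h + 1)) :
    ((r + (h + 1)).choose (h + 1) : ℝ) * δ ^ (h + 1) * x ^ (q + p) ≤ N' := by
  have hchoose : ((r + (h + 1)).choose (h + 1) : ℝ) * (h + 1) =
      (r + 1 + h).choose h * (r + 1) := by
    have := Nat.choose_succ_right_eq (r + 1 + h) h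
    rw [Nat.add_sub_cancel, show r + 1 + h = r + (h + 1) by ring] at this
    rw [show r + 1 + h = r + (h + 1) by ring]
    exact_mod_cast this
  refine le_of_mul_le_mul_right ?_ (by positivity : (0 : ℝ) < h + 1)
  calc ((r + (h + 1)).choose (h + 1) : ℝ) * δ ^ (h + 1) * x ^ (q + p) * (h + 1)
      = ((r + (h + 1)).choose (h + 1) : ℝ) * (h + 1) * (δ ^ (h + 1) * x ^ (q + p)) := by ring
    _ = ((r + 1 + h).choose h : ℝ) * δ ^ h * x ^ q * ((r + 1) * (δ * x ^ p)) := by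
      rw [hchoose]; ring
    _ ≤ N * ((r + 1) * (δ * x ^ p)) := by gcongr
    _ ≤ N' * (h + 1) := hN'

-- The surplus `r` counts the edges still to be attached to `H`; it lets the induction retain the
-- factor `i / s` in the number of ways to attach an edge when `i` of them remain.
theorem IsHypertree.choose_mul_pow_le_card_coloredCopies (hH : IsHypertree H) (hk : 0 < k)
    (hunif : ∀ E ∈ H, #E = k) (hc : IsAdaptedColoring H B c) (hpart : IsKPartition k F X)
    (hF : ∀ f ∈ F, #f = k) (hδ : 0 ≤ δ) (hx : 0 ≤ x) (hrich : HasRichProjections F X B s δ x)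
    (hsize : s * (δ * x ^ (k - 1)) ≤ #F) (hr : #(vertexSet H) + r ≤ s) :
    ((r + #H).choose #H : ℝ) * δ ^ #H * x ^ (#(vertexSet H) - #H) ≤
      #(coloredCopies H F X c) := by
  induction hH generalizing r with
  | single E =>
    simp only [mem_singleton, forall_eq] at hunif
    rw [vertexSet_singleton, hunif] at hr ⊢
    have hrs : (r : ℝ) + 1 ≤ s := by exact_mod_cast (by omega : r + 1 ≤ s)
    rw [card_singleton, Nat.choose_one_right, pow_one, Nat.cast_add_one, mul_assoc]
    calc ((r : ℝ) + 1) * (δ * x ^ (k - 1)) ≤ s * (δ * x ^ (k - 1)) := by gcongr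
      _ ≤ #F := hsize
      _ ≤ #(coloredCopies {E} F X c) := by
        exact_mod_cast card_le_card_coloredCopies_singleton hpart hF hunif
          (hc.injOn E (mem_singleton_self E))
  | @grow H E P hH hE hP hint ih =>
    have hEmem := mem_insert_self E H
    have hPmem : P ∈ insert E H := mem_insert_of_mem hP
    have hEP : E ≠ P := (ne_of_mem_of_not_mem hP hE).symm
    have hEk := hunif E hEmem
    have hEPk : #(E ∩ P) < k := hEk ▸ card_inter_lt_of_ne hEP (by rw [hEk, hunif P hPmem])
    have hunif' : ∀ E' ∈ H, #E' = k := fun E' h => hunif E' (mem_insert_of_mem h)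
    have hvert := card_vertexSet_insert_add_card_inter hint
    have hle := hH.card_le_card_vertexSet hk hunif'
    have hN := ih (r := r + 1) hunif' (hc.mono (subset_insert E H)) (by omega)
    have hN' := card_coloredCopies_mul_le hpart hF hE hint hEk hEPk (hc.injOn E hEmem)
      fun φ hφ => hφ.le_card_filter_inter_eq (r := r) hpart hrich hP hEPk (hc.injOn P hPmem)
        (hc.mapsTo_inter E hEmem P hPmem hEP) (by omega)
    have hexp : #(vertexSet (insert E H)) - (#H + 1) =
        #(vertexSet H) - #H + (k - 1 - #(E ∩ P)) := by omega
    rw [card_insert_of_notMem hE, hexp]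
    exact choose_succ_mul_pow_le_of_mul_le hδ hx hN hN'

theorem IsKGraphOn.pos_of_mem_MI (hF : IsKGraphOn k n F) {J : Finset (Fin k)}
    (hJ : J ∈ MI F X) : 0 < k ∧ 0 < n := by
  obtain ⟨⟨E, E'⟩, hp, -⟩ := mem_image.1 hJ
  obtain ⟨hmem, hne⟩ := mem_filter.1 hp
  obtain ⟨hE, hE'⟩ := mem_product.1 hmem
  have hk : 0 < k := by
    refine Nat.pos_of_ne_zero fun hk => hne ?_
    rw [card_eq_zero.1 ((hF E hE).2.trans hk), card_eq_zero.1 ((hF E' hE').2.trans hk)]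
  have hkn : k ≤ n := by
    simpa [vtx, (hF E hE).2] using card_le_card (hF E hE).1
  exact ⟨hk, hk.trans_le hkn⟩

end Counting

theorem stmt_11_general {α : Type} [DecidableEq α] {k s n : ℕ} {ε : ℝ} (hε : 0 ≤ ε)
    {H : Finset (Finset α)} (hH : IsKTree k H) (hs : #(vertexSet H) ≤ s)
    {F : Finset (Finset ℕ)} {X : Fin k → Finset ℕ} (hF : IsKGraphOn k n F)
    (hpart : IsKPartition k F X) (hsh : SuperHomogeneous n k s F X)
    (hsize : ε * (n : ℝ) ^ (k - 1) ≤ #F) {B : Finset (Fin k)} (hB : ∀ J ⊆ B, J ∈ MI F X)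
    (hshared : ∀ E ∈ H, #{v ∈ E | vdeg H v ≠ 1} ≤ #B) :
    (ε / (2 * k * s)) ^ #H * (n : ℝ) ^ (#(vertexSet H) - #H) ≤ #(copies H F) := by
  obtain ⟨hk, hn⟩ := hF.pos_of_mem_MI (hB ∅ (empty_subset B))
  have : Nonempty (Fin k) := ⟨⟨0, hk⟩⟩
  obtain ⟨c, hc⟩ := hH.1.exists_isAdaptedColoring
    (fun E hE => (hH.2 E hE).trans_le (Fintype.card_fin k).ge) hshared
  have hs₀ : 0 < s :=
    hH.1.nonempty.card_pos.trans_le ((hH.1.card_le_card_vertexSet hk hH.2).trans hs)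
  have hrich := hsh.hasRichProjections hB hn hk hs₀ hsize
  have hbase : s * (ε / (2 * k * s) * (n : ℝ) ^ (k - 1)) ≤ #F := by
    refine le_trans ?_ hsize
    rw [← mul_assoc]
    gcongr
    calc s * (ε / (2 * k * s)) = ε / (2 * k) := by field_simp
      _ ≤ ε := div_le_self hε (by exact_mod_cast (by omega : 1 ≤ 2 * k))
  have hcount := hH.1.choose_mul_pow_le_card_coloredCopies hk hH.2 hc hpart
    (fun f hf => (hF f hf).2) (by positivity) n.cast_nonneg hrich hbase (r := 0) hs
  rw [zero_add, Nat.choose_self, Nat.cast_one, one_mul] at hcount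
  exact hcount.trans (Nat.cast_le.2 (card_le_card coloredCopies_subset_copies))

/-- an `s`-super-homogeneous `k`-partite `k`-graph of type 1 with at least
`ε·n^{k−1}` edges contains at least `(ε/(2ks))^t·n^{s−t}` copies of any 2-contractible
`k`-tree with `s` vertices and `t` edges. -/
theorem stmt_11 {α : Type} [DecidableEq α] (k s t : ℕ) (hk : 4 ≤ k) (ε : ℝ) (hε : 0 < ε)
    (H : Finset (Finset α)) (hH : IsKTree k H) (h2 : TwoContractible H)
    (hvs : (vertexSet H).card = s) (hte : H.card = t)
    (n : ℕ) (F : Finset (Finset ℕ)) (X : Fin k → Finset ℕ)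
    (hF : IsKGraphOn k n F) (hpart : IsKPartition k F X)
    (hsh : SuperHomogeneous n k s F X)
    (hsize : ε * (n : ℝ) ^ (k - 1) ≤ (F.card : ℝ))
    (htype : TypeOne k (MI F X)) :
    (ε / (2 * (k : ℝ) * (s : ℝ))) ^ t * (n : ℝ) ^ (s - t) ≤ ((copies H F).card : ℝ) := by
  subst hvs hte
  obtain ⟨B, hBcard, hB⟩ := htype
  exact stmt_11_general hε.le hH le_rfl hF hpart hsh hsize hB fun E hE =>
    hBcard ▸ hH.2 E hE ▸ h2.card_filter_vdeg_ne_one_le hE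
end
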